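/- arXiv:1106.1781 — 4 statements merged into one kernel-verified Lean document; each statement's English description precedes it below -/
import Mathlib

section
/- For every integer N ≥ 1 and every periodic grid function u one has (u, u·D₀u)_h + (u, D₀(u²))_h = 0, where (u·D₀u)_i = u_i(D₀u)_i and (D₀(u²))_i = (u_{i+1}² − u_{i−1}²)/(2Δx); i.e. the discretization −(1/3)[u D₀u + D₀u²] of the nonlinear term is energy conservative. -/
/-! The sum of the two energy terms is, up to the factor `1 / (2 * Δx)`, the exact forward
difference `F (i + 1) - F i` of the flux `F i = u i * u (i - 1) * (u i + u (i - 1))`. Summed over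
one period it telescopes (`sum_Icc_forward_diff`) to `F (N + 1) - F 1`, which vanishes by
periodicity. -/

/-- Forward difference operator `(D₊u)_i = (u_{i+1} − u_i)/h`. -/
noncomputable def Dp (h : ℝ) (u : ℤ → ℝ) : ℤ → ℝ := fun i => (u (i + 1) - u i) / h

/-- Backward difference operator `(D₋u)_i = (u_i − u_{i−1})/h`. -/
noncomputable def Dm (h : ℝ) (u : ℤ → ℝ) : ℤ → ℝ := fun i => (u i - u (i - 1)) / h

/-- Central difference operator `(D₀u)_i = (u_{i+1} − u_{i−1})/(2h)`. -/
noncomputable def D0 (h : ℝ) (u : ℤ → ℝ) : ℤ → ℝ := fun i => (u (i + 1) - u (i - 1)) / (2 * h)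

/-- Discrete inner product `(f,g)_h = h Σ_{i=1}^N f_i g_i`. -/
noncomputable def iph (N : ℕ) (h : ℝ) (f g : ℤ → ℝ) : ℝ :=
  h * ∑ i ∈ Finset.Icc (1 : ℤ) (N : ℤ), f i * g i

/-- Discrete squared norm `‖f‖_h² = h Σ_{i=1}^N f_i²`. -/
noncomputable def nh2 (N : ℕ) (h : ℝ) (f : ℤ → ℝ) : ℝ :=
  h * ∑ i ∈ Finset.Icc (1 : ℤ) (N : ℤ), (f i) ^ 2

/-- Discrete norm `‖f‖_h`. -/
noncomputable def normh (N : ℕ) (h : ℝ) (f : ℤ → ℝ) : ℝ := Real.sqrt (nh2 N h f)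

/-- A periodic grid function with period `N`: `u_{i+N} = u_i` for all `i`. -/
def PeriodicGrid (N : ℕ) (u : ℤ → ℝ) : Prop := ∀ i : ℤ, u (i + N) = u i

theorem sum_Icc_forward_diff (F : ℤ → ℝ) (n : ℕ) :
    ∑ i ∈ Finset.Icc (1 : ℤ) (n : ℤ), (F (i + 1) - F i) = F (n + 1) - F 1 := by
  induction n with
  | zero => simp
  | succ n ih =>
    have hI : Finset.Icc (1 : ℤ) ((n + 1 : ℕ) : ℤ)
        = insert ((n : ℤ) + 1) (Finset.Icc (1 : ℤ) (n : ℤ)) := by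
      ext x
      simp only [Finset.mem_Icc, Finset.mem_insert]
      omega
    rw [hI, Finset.sum_insert (by simp), ih]
    push_cast
    ring

/-- Energy conservation of the discretized nonlinear term (key cancellation in the proof of
Theorem 2.4): for every `N ≥ 1` and every periodic grid function `u`,
`(u, u·D₀u)_h + (u, D₀(u²))_h = 0` with `Δx = 1/N`. -/
theorem discrete_nonlinear_conservative (N : ℕ) (hN : 1 ≤ N) (Δx : ℝ) (hΔx : Δx = 1 / N)
    (u : ℤ → ℝ) (hu : PeriodicGrid N u) :
    iph N Δx u (fun i => u i * D0 Δx u i) + iph N Δx u (D0 Δx (fun j => (u j) ^ 2)) = 0 := by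
  have key : ∑ i ∈ Finset.Icc (1 : ℤ) (N : ℤ),
      (u i * (u i * D0 Δx u i) + u i * D0 Δx (fun j => (u j) ^ 2) i) = 0 := by
    let F : ℤ → ℝ := fun i => u i * u (i - 1) * (u i + u (i - 1))
    have hF : ∀ i, u i * (u i * D0 Δx u i) + u i * D0 Δx (fun j => (u j) ^ 2) i
        = (F (i + 1) - F i) / (2 * Δx) := by
      intro i
      simp only [F, D0, add_sub_cancel_right]
      ring
    have hper : F (N + 1) = F 1 := by
      have h0 : u N = u 0 := by simpa using hu 0
      have h1 : u (N + 1) = u 1 := by simpa [add_comm] using hu 1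
      simp [F, h0, h1]
    rw [Finset.sum_congr rfl fun i _ => hF i, ← Finset.sum_div, sum_Icc_forward_diff, hper]
    simp
  rw [iph, iph, ← mul_add, ← Finset.sum_add_distrib, key, mul_zero]
end

section
/- For every k₀ > 0 there exist constants ν₁, ν₂ > 0, independent of N, such that for every integer N ≥ 1 and all periodic grid functions u, v satisfying ‖u‖_h ≤ k₀ and v_i = −(1/3)[u_i(D₀u)_i + (D₀(u²))_i] − (D₋D₊²u)_i + (D₊³D₋²u)_i for all i, one has ‖D₊³D₋²u‖_h ≤ ν₁‖v‖_h + ν₂. -/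
section Periodic

variable {N : ℕ} {h : ℝ} {f g u : ℤ → ℝ}

lemma PeriodicGrid.dp (hf : PeriodicGrid N f) : PeriodicGrid N (Dp h f) := by
  intro i
  have h1 := hf (i + 1)
  have h0 := hf i
  rw [add_right_comm] at h1
  simp only [Dp, h1, h0]

/-- The sum of a periodic function over a period does not depend on where the period starts. -/
lemma sum_range_shift (hf : PeriodicGrid N f) (i : ℤ) :
    ∑ n ∈ Finset.range N, f (i + n) = ∑ n ∈ Finset.range N, f n := by
  have step : ∀ i : ℤ, ∑ n ∈ Finset.range N, f (i + 1 + n) = ∑ n ∈ Finset.range N, f (i + n) := by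
    intro i
    have h1 := Finset.sum_range_succ (fun n : ℕ => f (i + n)) N
    have h2 := Finset.sum_range_succ' (fun n : ℕ => f (i + n)) N
    have h3 := hf i
    have h4 : ∀ n : ℕ, f (i + 1 + n) = f (i + ((n + 1 : ℕ) : ℤ)) := by
      intro n; congr 1; push_cast; ring
    simp only [h4]
    simp only [Nat.cast_zero, add_zero] at h2
    linarith
  induction i using Int.induction_on with
  | zero => simp
  | succ k ih => rw [step, ih]
  | pred k ih =>
    rw [← ih, ← step, sub_add_cancel]

lemma sum_Icc_eq (f : ℤ → ℝ) :
    ∑ i ∈ Finset.Icc (1 : ℤ) (N : ℤ), f i = ∑ n ∈ Finset.range N, f (1 + n) := by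
  induction N with
  | zero => simp
  | succ k ih =>
    rw [Finset.sum_range_succ, ← ih]
    have : Finset.Icc (1 : ℤ) ((k + 1 : ℕ) : ℤ) = insert (1 + (k : ℤ)) (Finset.Icc (1 : ℤ) k) := by
      ext x
      simp only [Finset.mem_Icc, Finset.mem_insert]
      push_cast
      omega
    rw [this, Finset.sum_insert (by simp), add_comm]

lemma sum_Icc_eq_range (hf : PeriodicGrid N f) (i : ℤ) :
    ∑ j ∈ Finset.Icc (1 : ℤ) (N : ℤ), f j = ∑ n ∈ Finset.range N, f (i + n) := by
  rw [sum_Icc_eq, sum_range_shift hf, sum_range_shift hf]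

lemma sum_Icc_shift (hf : PeriodicGrid N f) (c : ℤ) :
    ∑ i ∈ Finset.Icc (1 : ℤ) (N : ℤ), f (i + c) = ∑ i ∈ Finset.Icc (1 : ℤ) (N : ℤ), f i := by
  rw [sum_Icc_eq (fun i => f (i + c)), sum_Icc_eq_range hf (1 + c)]
  simp only [add_right_comm]

lemma normh_nonneg : 0 ≤ normh N h f := Real.sqrt_nonneg _

lemma nh2_nonneg (hh : 0 ≤ h) : 0 ≤ nh2 N h f :=
  mul_nonneg hh (Finset.sum_nonneg fun _ _ => sq_nonneg _)

lemma normh_sq (hh : 0 ≤ h) : normh N h f ^ 2 = nh2 N h f := Real.sq_sqrt (nh2_nonneg hh)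

lemma normh_shift (hf : PeriodicGrid N f) (c : ℤ) :
    normh N h (fun i => f (i + c)) = normh N h f := by
  have hp : PeriodicGrid N (fun i => f i ^ 2) := fun i => by simp only [hf i]
  simp only [normh, nh2]
  rw [sum_Icc_shift hp c]

lemma iph_le (hh : 0 ≤ h) (f g : ℤ → ℝ) : iph N h f g ≤ normh N h f * normh N h g := by
  refine le_of_pow_le_pow_left₀ two_ne_zero ?_ ?_
  · exact mul_nonneg normh_nonneg normh_nonneg
  · rw [mul_pow, normh_sq hh, normh_sq hh, iph, nh2, nh2]
    have := Finset.sum_mul_sq_le_sq_mul_sq (Finset.Icc (1 : ℤ) (N : ℤ)) f g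
    nlinarith [mul_le_mul_of_nonneg_left this (sq_nonneg h)]

lemma normh_add_le (hh : 0 ≤ h) (f g : ℤ → ℝ) :
    normh N h (fun i => f i + g i) ≤ normh N h f + normh N h g := by
  refine le_of_pow_le_pow_left₀ two_ne_zero ?_ ?_
  · exact add_nonneg normh_nonneg normh_nonneg
  · have e : nh2 N h (fun i => f i + g i) = nh2 N h f + 2 * iph N h f g + nh2 N h g := by
      simp only [nh2, iph, add_sq, Finset.sum_add_distrib, mul_assoc, ← Finset.mul_sum]
      ring
    rw [normh_sq hh, e, add_sq, normh_sq hh, normh_sq hh]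
    linarith [iph_le (N := N) hh f g]

lemma normh_mono (hh : 0 ≤ h) (hfg : ∀ i, |f i| ≤ |g i|) : normh N h f ≤ normh N h g :=
  Real.sqrt_le_sqrt (mul_le_mul_of_nonneg_left
    (Finset.sum_le_sum fun i _ => sq_le_sq.2 (hfg i)) hh)

lemma normh_smul {c : ℝ} (hc : 0 ≤ c) (f : ℤ → ℝ) :
    normh N h (fun i => c * f i) = c * normh N h f := by
  have : nh2 N h (fun i => c * f i) = c ^ 2 * nh2 N h f := by
    simp only [nh2, mul_pow, ← Finset.mul_sum]
    ring
  rw [normh, this, Real.sqrt_mul (sq_nonneg c), Real.sqrt_sq hc, normh]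

lemma Dm_eq (h : ℝ) (f : ℤ → ℝ) : Dm h f = fun i => Dp h f (i + (-1)) := by
  funext i
  simp [Dm, Dp, ← sub_eq_add_neg]

lemma Dp_shift (h : ℝ) (f : ℤ → ℝ) (c : ℤ) :
    Dp h (fun i => f (i + c)) = fun i => Dp h f (i + c) := by
  funext i
  simp [Dp, add_right_comm]

/-- Log-convexity of the norms of successive differences: summation by parts turns `(D₊f, D₊f)`
into `-(f(· + 1), D₊D₊f)`, to which Cauchy–Schwarz applies. -/
lemma normh_Dp_sq_le (hh : 0 ≤ h) (hf : PeriodicGrid N f) :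
    normh N h (Dp h f) ^ 2 ≤ normh N h f * normh N h (Dp h (Dp h f)) := by
  set g := Dp h f with hg
  have hgp : PeriodicGrid N g := hf.dp
  have hp : PeriodicGrid N (fun i => f i * g i) := fun i => by simp only [hf i, hgp i]
  have parts : nh2 N h g = iph N h (fun i => -f (i + 1)) (Dp h g) := by
    have e : ∀ i, g i ^ 2 - (-f (i + 1)) * Dp h g i
        = (f (i + 1) * g (i + 1) - f i * g i) / h := by
      intro i
      have : g i ^ 2 = g i * ((f (i + 1) - f i) / h) := by rw [sq]; rfl
      rw [this]
      simp only [Dp]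
      ring
    have s := sum_Icc_shift hp 1
    rw [nh2, iph, ← sub_eq_zero, ← mul_sub, ← Finset.sum_sub_distrib]
    simp only [e]
    rw [← Finset.sum_div, Finset.sum_sub_distrib, s, sub_self, zero_div, mul_zero]
  have hn : normh N h (fun i => -f (i + 1)) = normh N h f := by
    rw [← normh_shift hf 1]
    simp [normh, nh2]
  rw [normh_sq hh, parts, ← hn]
  exact iph_le hh _ _

/-- On a grid of total length one, the discrete `L¹` norm is at most the `L²` norm. -/
lemma mean_abs_le (hh : 0 ≤ h) (hN : h * N = 1) (hf : PeriodicGrid N f) (i : ℤ) :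
    h * ∑ n ∈ Finset.range N, |f (i + n)| ≤ normh N h f := by
  have hp : PeriodicGrid N (fun i => |f i|) := fun i => by simp only [hf i]
  rw [← sum_Icc_eq_range hp i]
  have h1 := iph_le (N := N) hh (fun i => |f i|) (fun _ => 1)
  have h2 : normh N h (fun _ => 1) = 1 := by simp [normh, nh2, hN]
  have h3 : normh N h (fun i => |f i|) = normh N h f := by simp [normh, nh2]
  simpa [h2, h3, iph] using h1

/-- Discrete Sobolev inequality: each value of `u` differs from any other one by at most the total
variation over a period, so averaging over the other point bounds it by the two `L¹` norms. -/
lemma sup_bound (hh : 0 < h) (hN : h * N = 1) (hu : PeriodicGrid N u) (i : ℤ) :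
    |u i| ≤ normh N h u + normh N h (Dp h u) := by
  have tele : ∀ n : ℕ, |u i| ≤ |u (i + n)| + ∑ m ∈ Finset.range n, h * |Dp h u (i + m)| := by
    intro n
    induction n with
    | zero => simp
    | succ k ih =>
      rw [Finset.sum_range_succ]
      have e : h * |Dp h u (i + k)| = |u (i + (k + 1 : ℕ)) - u (i + k)| := by
        rw [Dp, abs_div, abs_of_pos hh, mul_div_cancel₀ _ hh.ne']
        push_cast
        rw [add_assoc]
      have := abs_sub_abs_le_abs_sub (u (i + k)) (u (i + (k + 1 : ℕ)))
      rw [abs_sub_comm] at this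
      linarith
  have hvar : ∀ n ∈ Finset.range N, |u i| ≤ |u (i + n)| + normh N h (Dp h u) := by
    intro n hn
    have h1 : ∑ m ∈ Finset.range n, h * |Dp h u (i + m)|
        ≤ ∑ m ∈ Finset.range N, h * |Dp h u (i + m)| :=
      Finset.sum_le_sum_of_subset_of_nonneg
        (Finset.range_mono (Finset.mem_range.1 hn).le) fun _ _ _ => by positivity
    have h2 := mean_abs_le hh.le hN (hu.dp (h := h)) i
    rw [Finset.mul_sum] at h2
    linarith [tele n]
  have hs := mul_le_mul_of_nonneg_left (Finset.sum_le_sum hvar) hh.le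
  rw [Finset.sum_add_distrib, Finset.sum_const, Finset.sum_const, Finset.card_range, nsmul_eq_mul,
    nsmul_eq_mul, mul_add, ← mul_assoc, ← mul_assoc, hN, one_mul, one_mul] at hs
  linarith [mean_abs_le hh.le hN hu i]

/-- The nonlinear term factors as `(1/3)(u_{i-1} + u_i + u_{i+1}) (D₀u)_i`, and `D₀u` is the average
of two translates of `D₊u`. -/
lemma normh_nonlinear_le (hh : 0 < h) (hN : h * N = 1) (hu : PeriodicGrid N u) :
    normh N h (fun i => (1/3) * (u i * D0 h u i + D0 h (fun j => (u j) ^ 2) i))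
      ≤ (normh N h u + normh N h (Dp h u)) * normh N h (Dp h u) := by
  set M := normh N h u + normh N h (Dp h u) with hM
  have hM0 : 0 ≤ M := add_nonneg normh_nonneg normh_nonneg
  have hD0 : normh N h (D0 h u) ≤ normh N h (Dp h u) := by
    have e : D0 h u = fun i => (1/2) * Dp h u i + (1/2) * Dp h u (i + (-1)) := by
      funext i
      simp only [D0, Dp, ← sub_eq_add_neg, sub_add_cancel]
      ring
    have h1 := normh_add_le (N := N) hh.le (fun i => (1/2) * Dp h u i)
      (fun i => (1/2) * Dp h u (i + (-1)))
    rw [normh_smul (by norm_num), normh_smul (c := 1/2) (by norm_num) (fun i => Dp h u (i + (-1))),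
      normh_shift hu.dp, ← e] at h1
    linarith
  refine le_trans (normh_mono (g := fun i => M * D0 h u i) hh.le fun i => ?_) ?_
  · have e : (1/3) * (u i * D0 h u i + D0 h (fun j => (u j) ^ 2) i)
        = (1/3) * (u i + u (i + 1) + u (i - 1)) * D0 h u i := by
      simp only [D0]; ring
    rw [e, abs_mul, abs_mul M, abs_of_nonneg hM0]
    gcongr
    have h0 := abs_le.1 (sup_bound hh hN hu i)
    have h1 := abs_le.1 (sup_bound hh hN hu (i + 1))
    have h2 := abs_le.1 (sup_bound hh hN hu (i - 1))
    rw [abs_le]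
    constructor <;> linarith [h0.1, h0.2, h1.1, h1.2, h2.1, h2.2]
  · rw [normh_smul hM0]
    gcongr

end Periodic

lemma le_of_sq_le_mul {a b c t : ℝ} (ht : 0 < t) (ha : 0 ≤ a) (hc : 0 ≤ c)
    (hb : b ^ 2 ≤ a * c) : b ≤ t * a + c / (4 * t) := by
  apply le_of_pow_le_pow_left₀ two_ne_zero (by positivity)
  have e : (t * a + c / (4 * t)) ^ 2 = a * c + (t * a - c / (4 * t)) ^ 2 := by
    field_simp
    ring
  rw [e]
  nlinarith [sq_nonneg (t * a - c / (4 * t))]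

/-- Interpolation of the second and third terms of a log-convex sequence between the zeroth and the
fifth one, with a free parameter `t` weighting the two ends. -/
lemma interpolation {a₀ a₁ a₂ a₃ a₄ a₅ t : ℝ} (ht : 0 < t) (h0 : 0 ≤ a₀) (h1 : 0 ≤ a₁)
    (h2 : 0 ≤ a₂) (h3 : 0 ≤ a₃) (h4 : 0 ≤ a₄) (h5 : 0 ≤ a₅)
    (c1 : a₁ ^ 2 ≤ a₀ * a₂) (c2 : a₂ ^ 2 ≤ a₁ * a₃) (c3 : a₃ ^ 2 ≤ a₂ * a₄)
    (c4 : a₄ ^ 2 ≤ a₃ * a₅) :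
    a₂ ≤ 3 * t ^ 2 * a₀ + a₅ / (8 * t ^ 3) ∧ a₃ ≤ 4 * t ^ 3 * a₀ + a₅ / (4 * t ^ 2) := by
  have ht' : t ≠ 0 := ht.ne'
  -- The parameter `t / 2` is the one for which the recurring `a₂` is absorbed with factor `1/2`.
  have d1 := mul_le_mul_of_nonneg_left (le_of_sq_le_mul (t := t / 2) (by positivity) h0 h2 c1) ht.le
  have d2 := le_of_sq_le_mul ht h1 h3 c2
  have d3 := le_of_sq_le_mul ht h2 h4 c3
  have d4 := le_of_sq_le_mul ht h3 h5 c4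
  have e1 : t * (t / 2 * a₀ + a₂ / (4 * (t / 2))) = t ^ 2 * a₀ / 2 + a₂ / 2 := by
    field_simp
    ring
  have b2 : a₂ ≤ t ^ 2 * a₀ + a₃ / (2 * t) := by
    have : a₃ / (2 * t) = 2 * (a₃ / (4 * t)) := by field_simp; ring
    rw [this]; linarith
  have m2 := mul_le_mul_of_nonneg_left b2 ht.le
  have e2 : t * (t ^ 2 * a₀ + a₃ / (2 * t)) = t ^ 3 * a₀ + a₃ / 2 := by field_simp
  have b3 : a₃ ≤ 2 * t ^ 3 * a₀ + a₄ / (2 * t) := by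
    have : a₄ / (2 * t) = 2 * (a₄ / (4 * t)) := by field_simp; ring
    rw [this]; linarith
  have m3 := mul_le_mul_of_nonneg_left b3 ht.le
  have e3 : t * (2 * t ^ 3 * a₀ + a₄ / (2 * t)) = 2 * t ^ 4 * a₀ + a₄ / 2 := by field_simp
  have b4 : a₄ ≤ 4 * t ^ 4 * a₀ + a₅ / (2 * t) := by
    have : a₅ / (2 * t) = 2 * (a₅ / (4 * t)) := by field_simp; ring
    rw [this]; linarith
  have f3 : a₃ ≤ 4 * t ^ 3 * a₀ + a₅ / (4 * t ^ 2) := by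
    have m : a₄ / (2 * t) ≤ (4 * t ^ 4 * a₀ + a₅ / (2 * t)) / (2 * t) := by gcongr
    have e : (4 * t ^ 4 * a₀ + a₅ / (2 * t)) / (2 * t) = 2 * t ^ 3 * a₀ + a₅ / (4 * t ^ 2) := by
      field_simp; ring
    linarith
  refine ⟨?_, f3⟩
  have m : a₃ / (2 * t) ≤ (4 * t ^ 3 * a₀ + a₅ / (4 * t ^ 2)) / (2 * t) := by gcongr
  have e : (4 * t ^ 3 * a₀ + a₅ / (4 * t ^ 2)) / (2 * t) = 2 * t ^ 2 * a₀ + a₅ / (8 * t ^ 3) := by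
    field_simp; ring
  linarith

/-- Paper's estimate (2.14): for every `k₀ > 0` there exist constants `ν₁, ν₂ > 0`,
independent of `N`, such that for every `N ≥ 1` and all periodic grid functions `u, v` with
`‖u‖_h ≤ k₀` and `v_i = −(1/3)[u_i (D₀u)_i + (D₀u²)_i] − (D₋D₊²u)_i + (D₊³D₋²u)_i`,
one has `‖D₊³D₋²u‖_h ≤ ν₁ ‖v‖_h + ν₂` (with `Δx = 1/N`). -/
theorem fifth_difference_bound (k₀ : ℝ) (hk₀ : 0 < k₀) :
    ∃ ν₁ > 0, ∃ ν₂ > 0, ∀ N : ℕ, 1 ≤ N → ∀ Δx : ℝ, Δx = 1 / N →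
      ∀ u v : ℤ → ℝ, PeriodicGrid N u → PeriodicGrid N v →
        normh N Δx u ≤ k₀ →
        (∀ i : ℤ, v i = -(1/3) * (u i * D0 Δx u i + D0 Δx (fun j => (u j) ^ 2) i)
            - Dm Δx (Dp Δx (Dp Δx u)) i
            + Dp Δx (Dp Δx (Dp Δx (Dm Δx (Dm Δx u)))) i) →
        normh N Δx (Dp Δx (Dp Δx (Dp Δx (Dm Δx (Dm Δx u)))))
          ≤ ν₁ * normh N Δx v + ν₂ := by
  -- In the interpolation below the parameter is `1 + k₀`; the constant is what it leaves over.
  refine ⟨2, by norm_num,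
    2 * (k₀ ^ 2 + 6 * (1 + k₀) ^ 2 * k₀ ^ 2 + 4 * (1 + k₀) ^ 3 * k₀), by positivity, ?_⟩
  intro N hN1 h hh u v hu _ hk hv
  have hNpos : (0 : ℝ) < N := by exact_mod_cast hN1
  have hpos : 0 < h := by rw [hh]; positivity
  have hN : h * N = 1 := by rw [hh]; field_simp
  have p1 : PeriodicGrid N (Dp h u) := hu.dp
  have p2 : PeriodicGrid N (Dp h (Dp h u)) := p1.dp
  have p3 : PeriodicGrid N (Dp h (Dp h (Dp h u))) := p2.dp
  have p4 : PeriodicGrid N (Dp h (Dp h (Dp h (Dp h u)))) := p3.dp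
  have p5 : PeriodicGrid N (Dp h (Dp h (Dp h (Dp h (Dp h u))))) := p4.dp
  have c1 := normh_Dp_sq_le hpos.le hu
  have c2 := normh_Dp_sq_le hpos.le p1
  have c3 := normh_Dp_sq_le hpos.le p2
  have c4 := normh_Dp_sq_le hpos.le p3
  have n3 : normh N h (Dm h (Dp h (Dp h u))) = normh N h (Dp h (Dp h (Dp h u))) := by
    rw [Dm_eq, normh_shift p3]
  have n5 : normh N h (Dp h (Dp h (Dp h (Dm h (Dm h u)))))
      = normh N h (Dp h (Dp h (Dp h (Dp h (Dp h u))))) := by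
    have e : Dm h (Dm h u) = fun i => Dp h (Dp h u) (i + (-2)) := by
      funext i
      simp only [Dm_eq, Dp_shift, add_assoc]
      norm_num
    rw [e, Dp_shift, Dp_shift, Dp_shift, normh_shift p5]
  have nl := normh_nonlinear_le hpos hN hu
  have split : Dp h (Dp h (Dp h (Dm h (Dm h u)))) = fun i => (v i
      + (1/3) * (u i * D0 h u i + D0 h (fun j => (u j) ^ 2) i)) + Dm h (Dp h (Dp h u)) i := by
    funext i
    rw [hv i]
    ring
  have tri : normh N h (Dp h (Dp h (Dp h (Dm h (Dm h u))))) ≤ normh N h v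
      + normh N h (fun i => (1/3) * (u i * D0 h u i + D0 h (fun j => (u j) ^ 2) i))
      + normh N h (Dm h (Dp h (Dp h u))) := by
    rw [split]
    refine (normh_add_le hpos.le _ _).trans ?_
    gcongr
    exact normh_add_le hpos.le _ _
  rw [n3, n5] at tri
  rw [n5]
  have z0 : 0 ≤ normh N h u := normh_nonneg
  have z1 : 0 ≤ normh N h (Dp h u) := normh_nonneg
  have z2 : 0 ≤ normh N h (Dp h (Dp h u)) := normh_nonneg
  have z3 : 0 ≤ normh N h (Dp h (Dp h (Dp h u))) := normh_nonneg
  have z4 : 0 ≤ normh N h (Dp h (Dp h (Dp h (Dp h u)))) := normh_nonneg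
  have z5 : 0 ≤ normh N h (Dp h (Dp h (Dp h (Dp h (Dp h u))))) := normh_nonneg
  generalize normh N h u = a₀ at *
  generalize normh N h (Dp h u) = a₁ at *
  generalize normh N h (Dp h (Dp h u)) = a₂ at *
  generalize normh N h (Dp h (Dp h (Dp h u))) = a₃ at *
  generalize normh N h (Dp h (Dp h (Dp h (Dp h u)))) = a₄ at *
  generalize normh N h (Dp h (Dp h (Dp h (Dp h (Dp h u))))) = a₅ at *
  have c1' : a₁ ^ 2 ≤ k₀ * a₂ := c1.trans (by gcongr)
  obtain ⟨i2, i3⟩ := interpolation (t := 1 + k₀) (by positivity) hk₀.le z1 z2 z3 z4 z5 c1' c2 c3 c4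
  have q1 : (a₀ + a₁) * a₁ ≤ k₀ ^ 2 + 2 * k₀ * a₂ := by
    nlinarith [mul_le_mul_of_nonneg_right hk z1, sq_nonneg (k₀ - a₁)]
  have q2 : 2 * k₀ * (a₅ / (8 * (1 + k₀) ^ 3)) ≤ a₅ / 4 := by
    rw [← mul_div_assoc, div_le_div_iff₀ (by positivity) (by norm_num)]
    have : k₀ ≤ (1 + k₀) ^ 3 := by nlinarith [pow_pos hk₀ 2, pow_pos hk₀ 3]
    nlinarith [mul_le_mul_of_nonneg_right this z5]
  have q3 : a₅ / (4 * (1 + k₀) ^ 2) ≤ a₅ / 4 := by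
    apply div_le_div_of_nonneg_left z5 (by norm_num)
    nlinarith [pow_pos hk₀ 2]
  have q4 := mul_le_mul_of_nonneg_left i2 (by positivity : 0 ≤ 2 * k₀)
  linarith
end

section
/- Let u : ℝ × [0,T] → ℝ be a smooth solution of the Kawahara equation u_t = −u u_x − u_{xxx} + u_{xxxxx} that is 1-periodic in x. Then for every t ∈ [0,T]: ∫₀¹ ( (1/3)u(x,t)³ − u_x(x,t)² − u_{xx}(x,t)² ) dx = ∫₀¹ ( (1/3)u(x,0)³ − u_x(x,0)² − u_{xx}(x,0)² ) dx. -/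
/-!
The Kawahara equation is Hamiltonian: with `G = u² + 2 u_xx - 2 u_xxxx`, the variational derivative
of the energy, it reads `u_t = -G_x / 2`. Hence the energy density `e = u³/3 - u_x² - u_xx²`
satisfies a local conservation law `e_t = F_x` with flux
`F = -G²/4 - 2 u_x w - 2 u_xx w_x + 2 u_xxx w`, where `w = u_t`; this uses the equation only through
`w = -G_x / 2` and the symmetry of second derivatives. As `F` is 1-periodic in `x`, its
`x`-derivative has zero integral over `[0, 1]`. Writing `e(x, t) - e(x, 0) = ∫₀ᵗ e_s(x, s) ds` and
exchanging the two integrals gives the claim.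
-/

namespace Kawahara

open MeasureTheory

/-- The derivative of `f` in the fixed direction `v`, as a function on the plane. It is the partial
derivative in `x` for `v = (1, 0)` and the one in `t` for `v = (0, 1)`. -/
noncomputable def dirD (v : ℝ × ℝ) (f : ℝ × ℝ → ℝ) : ℝ × ℝ → ℝ := fun p => fderiv ℝ f p v

lemma dirD_contDiff {f : ℝ × ℝ → ℝ} (hf : ContDiff ℝ (⊤ : ℕ∞) f) (v : ℝ × ℝ) :
    ContDiff ℝ (⊤ : ℕ∞) (dirD v f) :=
  (hf.fderiv_right (m := (⊤ : ℕ∞)) (by simp)).clm_apply contDiff_const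

lemma dirD_comm {f : ℝ × ℝ → ℝ} (hf : ContDiff ℝ (⊤ : ℕ∞) f) (v w : ℝ × ℝ) :
    dirD v (dirD w f) = dirD w (dirD v f) := by
  have hd : Differentiable ℝ (fderiv ℝ f) :=
    (hf.fderiv_right (m := (⊤ : ℕ∞)) (by simp)).differentiable (by simp)
  have key : ∀ (a b p : ℝ × ℝ), dirD a (dirD b f) p = fderiv ℝ (fderiv ℝ f) p a b := by
    intro a b p
    have h := ((hd p).hasFDerivAt.clm_apply (hasFDerivAt_const b p)).fderiv
    change fderiv ℝ (fun q => fderiv ℝ f q b) p a = _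
    rw [h]
    simp
  funext p
  rw [key, key]
  exact (hf.contDiffAt.isSymmSndFDerivAt (by simpa using WithTop.coe_le_coe.2 (le_top : (2 : ℕ∞) ≤ ⊤))) v w

lemma dirD_periodic {f : ℝ × ℝ → ℝ} (hf : ∀ p, f (p + (1, 0)) = f p) (v : ℝ × ℝ) :
    ∀ p, dirD v f (p + (1, 0)) = dirD v f p := by
  intro p
  have h := fderiv_comp_add_right (𝕜 := ℝ) (f := f) (x := p) ((1, 0) : ℝ × ℝ)
  simp only [dirD]
  rw [← h]
  simp only [hf]

lemma hasDerivAt_fst {f : ℝ × ℝ → ℝ} (hf : ContDiff ℝ (⊤ : ℕ∞) f) (x t : ℝ) :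
    HasDerivAt (fun y => f (y, t)) (dirD (1, 0) f (x, t)) x :=
  ((hf.differentiable (by simp)) (x, t)).hasFDerivAt.comp_hasDerivAt x
    ((hasDerivAt_id x).prodMk (hasDerivAt_const x t))

lemma hasDerivAt_snd {f : ℝ × ℝ → ℝ} (hf : ContDiff ℝ (⊤ : ℕ∞) f) (x t : ℝ) :
    HasDerivAt (fun s => f (x, s)) (dirD (0, 1) f (x, t)) t :=
  ((hf.differentiable (by simp)) (x, t)).hasFDerivAt.comp_hasDerivAt t
    ((hasDerivAt_const t x).prodMk (hasDerivAt_id t))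

lemma iterate_contDiff {f : ℝ × ℝ → ℝ} (hf : ContDiff ℝ (⊤ : ℕ∞) f) (v : ℝ × ℝ) (n : ℕ) :
    ContDiff ℝ (⊤ : ℕ∞) ((dirD v)^[n] f) := by
  induction n with
  | zero => exact hf
  | succ n ih => rw [Function.iterate_succ_apply']; exact dirD_contDiff ih v

lemma iteratedDeriv_eq {f : ℝ × ℝ → ℝ} (hf : ContDiff ℝ (⊤ : ℕ∞) f) (n : ℕ) (t : ℝ) :
    iteratedDeriv n (fun y => f (y, t)) = fun x => (dirD (1, 0))^[n] f (x, t) := by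
  induction n with
  | zero => simp
  | succ n ih =>
    rw [iteratedDeriv_succ, ih]
    funext x
    rw [(hasDerivAt_fst (iterate_contDiff hf _ n) x t).deriv, Function.iterate_succ_apply']

/-- A density whose time derivative is, for times in `[0, T]`, the space derivative of a periodic
flux has a conserved integral over one period. -/
lemma integral_eq_of_flux {T : ℝ} {e F : ℝ × ℝ → ℝ} (he : ContDiff ℝ (⊤ : ℕ∞) e)
    (hF : ContDiff ℝ (⊤ : ℕ∞) F) (hFper : ∀ p, F (p + (1, 0)) = F p)
    (h : ∀ x, ∀ t ∈ Set.Icc (0 : ℝ) T, dirD (0, 1) e (x, t) = dirD (1, 0) F (x, t))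
    {t : ℝ} (ht : t ∈ Set.Icc (0 : ℝ) T) :
    ∫ x in (0 : ℝ)..1, e (x, t) = ∫ x in (0 : ℝ)..1, e (x, 0) := by
  have hct : Continuous (dirD (0, 1) e) := (dirD_contDiff he _).continuous
  have hcx : Continuous (dirD (1, 0) F) := (dirD_contDiff hF _).continuous
  have hce : Continuous e := he.continuous
  have h1 : ∀ x, e (x, t) - e (x, 0) = ∫ s in (0 : ℝ)..t, dirD (0, 1) e (x, s) := fun x =>
    (intervalIntegral.integral_eq_sub_of_hasDerivAt (fun s _ => hasDerivAt_snd he x s)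
      (Continuous.intervalIntegrable (by fun_prop) _ _)).symm
  have h2 : ∀ s, ∫ x in (0 : ℝ)..1, dirD (1, 0) F (x, s) = 0 := by
    intro s
    rw [intervalIntegral.integral_eq_sub_of_hasDerivAt (fun x _ => hasDerivAt_fst hF x s)
      (Continuous.intervalIntegrable (by fun_prop) _ _)]
    have := hFper (0, s)
    simp only [Prod.mk_add_mk, zero_add, add_zero] at this
    rw [this, sub_self]
  rw [← sub_eq_zero, ← intervalIntegral.integral_sub
    (Continuous.intervalIntegrable (by fun_prop) _ _)
    (Continuous.intervalIntegrable (by fun_prop) _ _)]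
  simp only [h1]
  rw [intervalIntegral_intervalIntegral_swap (F := fun x s => dirD (0, 1) e (x, s))]
  · rw [intervalIntegral.integral_congr (g := fun _ => (0 : ℝ))]
    · simp
    · intro s hs
      rw [Set.uIcc_of_le ht.1] at hs
      simp only [h _ s ⟨hs.1, hs.2.trans ht.2⟩, h2]
  · exact (hct.continuousOn.integrableOn_compact (isCompact_uIcc.prod isCompact_uIcc)).mono_set
      (Set.prod_mono Set.uIoc_subset_uIcc Set.uIoc_subset_uIcc)

end Kawahara

open Kawahara in

/-- Paper's Lemma 2.4, conservation law (2.22): if `u` is a smooth solution of the Kawahara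
equation `u_t = −u u_x − u_{xxx} + u_{xxxxx}` on `ℝ × [0,T]`, 1-periodic in `x`, then the
functional `∫₀¹ ((1/3)u³ − u_x² − u_{xx}²) dx` is conserved. -/
theorem kawahara_energy_conservation (T : ℝ) (hT : 0 ≤ T) (u : ℝ → ℝ → ℝ)
    (hsmooth : ContDiff ℝ (⊤ : ℕ∞) (Function.uncurry u))
    (hper : ∀ x t : ℝ, u (x + 1) t = u x t)
    (heq : ∀ x : ℝ, ∀ t ∈ Set.Icc (0 : ℝ) T,
      deriv (fun s => u x s) t =
        - u x t * deriv (fun y => u y t) x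
        - iteratedDeriv 3 (fun y => u y t) x
        + iteratedDeriv 5 (fun y => u y t) x) :
    ∀ t ∈ Set.Icc (0 : ℝ) T,
      (∫ x in (0:ℝ)..1,
          ((1/3) * (u x t) ^ 3 - (deriv (fun y => u y t) x) ^ 2
            - (iteratedDeriv 2 (fun y => u y t) x) ^ 2))
        = ∫ x in (0:ℝ)..1,
            ((1/3) * (u x 0) ^ 3 - (deriv (fun y => u y 0) x) ^ 2
              - (iteratedDeriv 2 (fun y => u y 0) x) ^ 2) := by
  intro t ht
  set U : ℝ × ℝ → ℝ := Function.uncurry u with hU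
  let X : (ℝ × ℝ → ℝ) → ℝ × ℝ → ℝ := dirD (1, 0)
  have hXd : ∀ f, dirD (1, 0) f = X f := fun _ => rfl
  have hX : ∀ {f}, ContDiff ℝ (⊤ : ℕ∞) f → ContDiff ℝ (⊤ : ℕ∞) (X f) :=
    fun hf => dirD_contDiff hf _
  have hXp : ∀ {f : ℝ × ℝ → ℝ}, (∀ p, f (p + (1, 0)) = f p) → ∀ p, X f (p + (1, 0)) = X f p :=
    fun hf => dirD_periodic hf _
  have p0 : ∀ p, U (p + (1, 0)) = U p := by
    rintro ⟨x, s⟩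
    simpa [U] using hper x s
  set W : ℝ × ℝ → ℝ := dirD (0, 1) U with hW
  have c0 : ContDiff ℝ (⊤ : ℕ∞) U := hsmooth
  have c1 := hX c0
  have c2 := hX c1
  have c3 := hX c2
  have c4 := hX c3
  have p1 := hXp p0
  have p2 := hXp p1
  have p3 := hXp p2
  have p4 := hXp p3
  have w0 : ContDiff ℝ (⊤ : ℕ∞) W := dirD_contDiff c0 _
  have w1 := hX w0
  have q0 : ∀ p, W (p + (1, 0)) = W p := dirD_periodic p0 _
  have q1 := hXp q0
  have t1 : dirD (0, 1) (X U) = X W := dirD_comm c0 _ _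
  have t2 : dirD (0, 1) (X (X U)) = X (X W) := by
    rw [← t1]
    exact dirD_comm c1 _ _
  have hd1 : ∀ s x, deriv (fun y => u y s) x = X U (x, s) := fun s x => (hasDerivAt_fst c0 x s).deriv
  have hdn : ∀ n s x, iteratedDeriv n (fun y => u y s) x = X^[n] U (x, s) := fun n s x =>
    congrFun (iteratedDeriv_eq c0 n s) x
  have hpde : ∀ x, ∀ s ∈ Set.Icc (0 : ℝ) T, W (x, s) =
      - U (x, s) * X U (x, s) - X (X (X U)) (x, s) + X (X (X (X (X U)))) (x, s) := by
    intro x s hs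
    have h := heq x s hs
    rw [hd1, hdn, hdn] at h
    exact (hasDerivAt_snd c0 x s).deriv.symm.trans h
  let G : ℝ × ℝ → ℝ := fun p => U p ^ 2 + 2 * X (X U) p - 2 * X (X (X (X U))) p
  let e : ℝ × ℝ → ℝ := fun p => (1/3) * U p ^ 3 - X U p ^ 2 - X (X U) p ^ 2
  let F : ℝ × ℝ → ℝ := fun p => -(1/4) * G p ^ 2 - 2 * X U p * W p - 2 * X (X U) p * X W p
    + 2 * X (X (X U)) p * W p
  have hG : ContDiff ℝ (⊤ : ℕ∞) G := by fun_prop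
  have he : ContDiff ℝ (⊤ : ℕ∞) e := by fun_prop
  have hF : ContDiff ℝ (⊤ : ℕ∞) F := by fun_prop
  have hFp : ∀ p, F (p + (1, 0)) = F p := by
    intro p
    simp only [F, G, p0, p1, p2, p3, p4, q0, q1]
  have key : ∀ x, ∀ s ∈ Set.Icc (0 : ℝ) T, dirD (0, 1) e (x, s) = dirD (1, 0) F (x, s) := by
    intro x s hs
    have et : HasDerivAt (fun r => e (x, r)) _ s :=
      ((((hasDerivAt_snd c0 x s).pow 3).const_mul (1/3)).sub
        ((hasDerivAt_snd c1 x s).pow 2)).sub ((hasDerivAt_snd c2 x s).pow 2)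
    have gx : HasDerivAt (fun y => G (y, s)) _ x :=
      (((hasDerivAt_fst c0 x s).pow 2).add ((hasDerivAt_fst c2 x s).const_mul 2)).sub
        ((hasDerivAt_fst c4 x s).const_mul 2)
    have fx : HasDerivAt (fun y => F (y, s)) _ x :=
      ((((gx.pow 2).const_mul (-(1/4))).sub
        (((hasDerivAt_fst c1 x s).const_mul 2).mul (hasDerivAt_fst w0 x s))).sub
        (((hasDerivAt_fst c2 x s).const_mul 2).mul (hasDerivAt_fst w1 x s))).add
        (((hasDerivAt_fst c3 x s).const_mul 2).mul (hasDerivAt_fst w0 x s))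
    rw [(hasDerivAt_snd he x s).unique et, (hasDerivAt_fst hF x s).unique fx, t1, t2, ← hW]
    simp only [hXd, G]
    -- Eliminates the fifth `x`-derivative of `u`, the only place where the equation enters.
    have h5 : X (X (X (X (X U)))) (x, s) =
        W (x, s) + U (x, s) * X U (x, s) + X (X (X U)) (x, s) := by
      rw [hpde x s hs]
      ring
    rw [h5]
    push_cast
    ring
  have hfin := integral_eq_of_flux he hF hFp key ht
  simp only [hd1, hdn]
  exact hfin
end

section
/- Let u : ℝ × [0,∞) → ℝ be a smooth solution of the Kawahara equation u_t = −u u_x − u_{xxx} + u_{xxxxx} that is 1-periodic in x, and write f(x) = u(x,0). Then there exists a constant γ ≥ 0 such that for all t ≥ 0: ∫₀¹ u_t(x,t)² dx ≤ e^{γt} ∫₀¹ ( −f(x)f'(x) − f'''(x) + f'''''(x) )² dx. -/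
/-!
The function `w = u_t` solves the linearised equation `w_t = -(u w)_x - w_xxx + w_xxxxx`. Multiplying
by `w` and integrating over a period, the dispersive terms vanish and
`d/dt ∫ w² = -∫ u_x w²` (`hasDerivAt_integral_dt_sq`), so the claim follows from Grönwall's
inequality as soon as `u_x` is bounded uniformly in `x` *and* `t`, with `γ` that bound.

The uniform bound (`exists_slope_bound`) comes from two conserved quantities: the mass `∫ u²` and the
energy `∫ (u_x²/2 + u_xx²/2 - u³/6)`. Since `∫ u³` is at most `sup |u|` times the mass, and `sup |u|` is
controlled by the mass and an arbitrarily small multiple of `∫ u_x²`, the cubic term can be absorbed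
and `∫ u_xx²` stays bounded; as `u_x` has mean zero this bounds `sup |u_x|` (`slope_le`).

All time evolutions are obtained by writing the time derivative of a density as the space derivative
of an explicit periodic flux plus a remainder (`balance_law`).
-/

open MeasureTheory intervalIntegral Set

namespace Kawahara

/-! ### Calculus of smooth functions of two variables -/

/-- Joint smoothness of a curried function `v x t` of space and time. -/
def Smooth (v : ℝ → ℝ → ℝ) : Prop := ContDiff ℝ (⊤ : ℕ∞) (Function.uncurry v)

/-- The space derivative `v_x`. -/
noncomputable def dx (v : ℝ → ℝ → ℝ) : ℝ → ℝ → ℝ := fun x t => deriv (fun y => v y t) x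

/-- The time derivative `v_t`. -/
noncomputable def dt (v : ℝ → ℝ → ℝ) : ℝ → ℝ → ℝ := fun x t => deriv (fun s => v x s) t

/-- `1`-periodicity in the space variable. -/
def Per (v : ℝ → ℝ → ℝ) : Prop := ∀ x t, v (x + 1) t = v x t

lemma Smooth.hasFDerivAt {v : ℝ → ℝ → ℝ} (h : Smooth v) (p : ℝ × ℝ) :
    HasFDerivAt (Function.uncurry v) (fderiv ℝ (Function.uncurry v) p) p :=
  (ContDiff.differentiable h (by simp) p).hasFDerivAt

lemma Smooth.hasDerivAt_fst {v : ℝ → ℝ → ℝ} (h : Smooth v) (x t : ℝ) :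
    HasDerivAt (fun y => v y t) (fderiv ℝ (Function.uncurry v) (x, t) (1, 0)) x :=
  (h.hasFDerivAt (x, t)).comp_hasDerivAt (f := fun y => (y, t)) x ((hasDerivAt_id x).prodMk (hasDerivAt_const x t))

lemma Smooth.hasDerivAt_snd {v : ℝ → ℝ → ℝ} (h : Smooth v) (x t : ℝ) :
    HasDerivAt (fun s => v x s) (fderiv ℝ (Function.uncurry v) (x, t) (0, 1)) t :=
  (h.hasFDerivAt (x, t)).comp_hasDerivAt (f := fun s => (x, s)) t ((hasDerivAt_const t x).prodMk (hasDerivAt_id t))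

lemma Smooth.uncurry_dx {v : ℝ → ℝ → ℝ} (h : Smooth v) :
    Function.uncurry (dx v) = fun p => fderiv ℝ (Function.uncurry v) p (1, 0) := by
  ext ⟨x, t⟩
  exact (h.hasDerivAt_fst x t).deriv

lemma Smooth.uncurry_dt {v : ℝ → ℝ → ℝ} (h : Smooth v) :
    Function.uncurry (dt v) = fun p => fderiv ℝ (Function.uncurry v) p (0, 1) := by
  ext ⟨x, t⟩
  exact (h.hasDerivAt_snd x t).deriv

lemma Smooth.hasDerivAt_dx {v : ℝ → ℝ → ℝ} (h : Smooth v) (x t : ℝ) :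
    HasDerivAt (fun y => v y t) (dx v x t) x :=
  (h.hasDerivAt_fst x t).differentiableAt.hasDerivAt

lemma Smooth.hasDerivAt_dt {v : ℝ → ℝ → ℝ} (h : Smooth v) (x t : ℝ) :
    HasDerivAt (fun s => v x s) (dt v x t) t :=
  (h.hasDerivAt_snd x t).differentiableAt.hasDerivAt

lemma Smooth.fderiv {v : ℝ → ℝ → ℝ} (h : Smooth v) :
    ContDiff ℝ (⊤ : ℕ∞) (fderiv ℝ (Function.uncurry v)) :=
  ContDiff.fderiv_right h (by norm_cast)

lemma Smooth.dx {v : ℝ → ℝ → ℝ} (h : Smooth v) : Smooth (dx v) := by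
  unfold Smooth
  rw [h.uncurry_dx]
  exact h.fderiv.clm_apply contDiff_const

lemma Smooth.dt {v : ℝ → ℝ → ℝ} (h : Smooth v) : Smooth (dt v) := by
  unfold Smooth
  rw [h.uncurry_dt]
  exact h.fderiv.clm_apply contDiff_const

/-- Schwarz's theorem on the symmetry of mixed derivatives. -/
lemma Smooth.dt_dx {v : ℝ → ℝ → ℝ} (h : Smooth v) :
    Kawahara.dt (Kawahara.dx v) = Kawahara.dx (Kawahara.dt v) := by
  ext x t
  have hs : IsSymmSndFDerivAt ℝ (Function.uncurry v) (x, t) :=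
    (ContDiff.contDiffAt h).isSymmSndFDerivAt (by simp; norm_cast)
  have hF := (h.fderiv.differentiable (by simp) (x, t)).hasFDerivAt
  have h1 := congrFun h.dx.uncurry_dt (x, t)
  have h2 := congrFun h.dt.uncurry_dx (x, t)
  simp only [Function.uncurry_apply_pair] at h1 h2
  rw [h1, h2, h.uncurry_dx, h.uncurry_dt,
    (hF.clm_apply (hasFDerivAt_const _ _)).fderiv, (hF.clm_apply (hasFDerivAt_const _ _)).fderiv]
  simpa using hs (0, 1) (1, 0)

lemma Smooth.iter {v : ℝ → ℝ → ℝ} (h : Smooth v) (n : ℕ) : Smooth (Kawahara.dx^[n] v) := by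
  induction n with
  | zero => exact h
  | succ n ih => rw [Function.iterate_succ_apply']; exact ih.dx

lemma Smooth.dt_iter {v : ℝ → ℝ → ℝ} (h : Smooth v) (n : ℕ) :
    Kawahara.dt (Kawahara.dx^[n] v) = Kawahara.dx^[n] (Kawahara.dt v) := by
  induction n with
  | zero => rfl
  | succ n ih => rw [Function.iterate_succ_apply', (h.iter n).dt_dx, ih, Function.iterate_succ_apply']

lemma iteratedDeriv_eq_iter (v : ℝ → ℝ → ℝ) (n : ℕ) (t : ℝ) :
    iteratedDeriv n (fun y => v y t) = fun x => dx^[n] v x t := by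
  induction n with
  | zero => simp
  | succ n ih => rw [iteratedDeriv_succ, ih, Function.iterate_succ_apply']; rfl

lemma Per.dx {v : ℝ → ℝ → ℝ} (h : Per v) : Per (dx v) := by
  intro x t
  have : (fun y => v y t) = fun y => v (y + 1) t := by ext y; rw [h]
  conv_rhs => rw [Kawahara.dx, this, deriv_comp_add_const (f := fun y => v y t)]
  rfl

lemma Per.dt {v : ℝ → ℝ → ℝ} (h : Per v) : Per (dt v) := by
  intro x t
  simp only [Kawahara.dt, h x]

lemma Per.iter {v : ℝ → ℝ → ℝ} (h : Per v) (n : ℕ) : Per (Kawahara.dx^[n] v) := by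
  induction n with
  | zero => exact h
  | succ n ih => rw [Function.iterate_succ_apply']; exact ih.dx

lemma Smooth.continuous_slice {v : ℝ → ℝ → ℝ} (h : Smooth v) (t : ℝ) :
    Continuous fun x => v x t :=
  (ContDiff.continuous h).comp (by fun_prop : Continuous fun x : ℝ => (x, t))

/-- Differentiation under the integral sign over a period. -/
lemma Smooth.hasDerivAt_integral {q : ℝ → ℝ → ℝ} (h : Smooth q) (t : ℝ) :
    HasDerivAt (fun s => ∫ x in (0:ℝ)..1, q x s) (∫ x in (0:ℝ)..1, Kawahara.dt q x t) t := by
  obtain ⟨C, hC⟩ := (isCompact_Icc.prod isCompact_Icc :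
    IsCompact (Icc (0:ℝ) 1 ×ˢ Icc (t - 1) (t + 1))).exists_bound_of_continuousOn
      (ContDiff.continuous h.dt).continuousOn
  refine (intervalIntegral.hasDerivAt_integral_of_dominated_loc_of_deriv_le
    (F := fun s x => q x s) (F' := fun s x => Kawahara.dt q x s) (bound := fun _ => C)
    (Icc_mem_nhds (sub_one_lt t) (lt_add_one t)) ?_ ?_ ?_ ?_ ?_ ?_).2
  · exact .of_forall fun s => (h.continuous_slice s).aestronglyMeasurable
  · exact (h.continuous_slice t).intervalIntegrable _ _
  · exact (h.dt.continuous_slice t).aestronglyMeasurable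
  · refine .of_forall fun x hx s hs => hC (x, s) ⟨?_, hs⟩
    rw [uIoc_of_le zero_le_one] at hx
    exact ⟨hx.1.le, hx.2⟩
  · exact intervalIntegrable_const
  · exact .of_forall fun x _ s _ => h.hasDerivAt_dt x s

lemma Smooth.continuous_integral {q : ℝ → ℝ → ℝ} (h : Smooth q) :
    Continuous fun s => ∫ x in (0:ℝ)..1, q x s :=
  continuous_iff_continuousAt.2 fun t => (h.hasDerivAt_integral t).continuousAt

/-- The total space derivative of a quantity with equal values at the ends of a period has zero
integral. -/
lemma integral_flux {F F' : ℝ → ℝ} (hF : ∀ x, HasDerivAt F (F' x) x) (hF' : Continuous F')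
    (hper : F 1 = F 0) : ∫ x in (0:ℝ)..1, F' x = 0 := by
  rw [integral_eq_sub_of_hasDerivAt (fun x _ => hF x) (hF'.intervalIntegrable _ _), hper, sub_self]

/-! ### Sobolev-type bounds on a period -/

lemma abs_sub_le_integral {g g' : ℝ → ℝ} (hg : ∀ x, HasDerivAt g (g' x) x) (hg' : Continuous g')
    {x y : ℝ} (hx : x ∈ Icc (0:ℝ) 1) (hy : y ∈ Icc (0:ℝ) 1) :
    |g x - g y| ≤ ∫ z in (0:ℝ)..1, |g' z| := by
  wlog hxy : y ≤ x generalizing x y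
  · rw [abs_sub_comm]
    exact this hy hx (le_of_not_ge hxy)
  rw [← integral_eq_sub_of_hasDerivAt (fun z _ => hg z) (hg'.intervalIntegrable y x)]
  exact (abs_integral_le_integral_abs hxy).trans (integral_mono_interval hy.1 hxy hx.2
    (.of_forall fun z => abs_nonneg _) (hg'.abs.intervalIntegrable _ _))

/-- A function deviates from its mean over the period by at most its total variation. -/
lemma abs_le_of_mean {g g' : ℝ → ℝ} (hg : ∀ x, HasDerivAt g (g' x) x) (hg' : Continuous g')
    {x : ℝ} (hx : x ∈ Icc (0:ℝ) 1) :
    |g x - ∫ y in (0:ℝ)..1, g y| ≤ ∫ z in (0:ℝ)..1, |g' z| := by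
  have hc : Continuous g := continuous_iff_continuousAt.2 fun x => (hg x).continuousAt
  have h1 : g x - ∫ y in (0:ℝ)..1, g y = ∫ y in (0:ℝ)..1, (g x - g y) := by
    rw [integral_sub (by simp) (hc.intervalIntegrable _ _)]; simp
  rw [h1]
  have := norm_integral_le_of_norm_le_const (a := (0:ℝ)) (b := 1) (f := fun y => g x - g y)
    (C := ∫ z in (0:ℝ)..1, |g' z|) fun y hy => by
      rw [uIoc_of_le zero_le_one] at hy
      exact abs_sub_le_integral hg hg' hx ⟨hy.1.le, hy.2⟩
  simpa using this

/-- `∫ |g| ≤ (1 + ∫ g²) / 2` by Young's inequality; weighted with a parameter `m` in order to absorb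
`∫ g²` later on. -/
lemma integral_abs_le {g : ℝ → ℝ} (hg : Continuous g) (m : ℝ) :
    m * ∫ x in (0:ℝ)..1, |g x| ≤ (m ^ 2 + ∫ x in (0:ℝ)..1, g x ^ 2) / 2 := by
  have h : ∫ x in (0:ℝ)..1, m * |g x| ≤ ∫ x in (0:ℝ)..1, (m ^ 2 / 2 + 1 / 2 * g x ^ 2) := by
    refine integral_mono_on zero_le_one ((by fun_prop : Continuous _).intervalIntegrable _ _)
      ((by fun_prop : Continuous _).intervalIntegrable _ _) fun x _ => ?_
    nlinarith [sq_nonneg (m - |g x|), sq_abs (g x)]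
  rw [intervalIntegral.integral_const_mul, integral_add (by simp)
    ((by fun_prop : Continuous _).intervalIntegrable _ _),
    intervalIntegral.integral_const_mul] at h
  simp at h
  linarith

/-- Mass and energy of a periodic function bound its slope: the cubic term of the energy is
controlled by the mass times the sup norm, and the sup norm by the mass and a small multiple of the
Dirichlet integral, so the energy bounds the `L²` norm of the second derivative. -/
lemma slope_le {a a1 a2 : ℝ → ℝ} (ha : ∀ x, HasDerivAt a (a1 x) x)
    (ha1 : ∀ x, HasDerivAt a1 (a2 x) x) (ha2 : Continuous a2) (hper : a 1 = a 0) {M H : ℝ}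
    (hM : ∫ x in (0:ℝ)..1, a x ^ 2 = M)
    (hH : ∫ x in (0:ℝ)..1, (a1 x ^ 2 / 2 + a2 x ^ 2 / 2 - a x ^ 3 / 6) = H)
    {x : ℝ} (hx : x ∈ Icc (0:ℝ) 1) :
    |a1 x| ≤ (1 + 2 * H + M * (1 + M) / 6 + M ^ 2 / 6) / 2 := by
  have hc : Continuous a := continuous_iff_continuousAt.2 fun x => (ha x).continuousAt
  have hc1 : Continuous a1 := continuous_iff_continuousAt.2 fun x => (ha1 x).continuousAt
  have ii : ∀ {g : ℝ → ℝ}, Continuous g → IntervalIntegrable g volume 0 1 :=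
    fun h => h.intervalIntegrable _ _
  have hM0 : 0 ≤ M := hM ▸ integral_nonneg zero_le_one fun x _ => sq_nonneg _
  have hX0 : 0 ≤ ∫ x in (0:ℝ)..1, a1 x ^ 2 := integral_nonneg zero_le_one fun x _ => sq_nonneg _
  -- the sup norm of `a`
  have hsup : ∀ y ∈ Icc (0:ℝ) 1,
      |a y| ≤ (∫ z in (0:ℝ)..1, |a z|) + ∫ z in (0:ℝ)..1, |a1 z| := fun y hy => by
    have h1 := abs_le_of_mean ha hc1 hy
    have h2 : |∫ z in (0:ℝ)..1, a z| ≤ ∫ z in (0:ℝ)..1, |a z| :=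
      abs_integral_le_integral_abs zero_le_one
    have h3 := abs_sub_abs_le_abs_sub (a y) (∫ z in (0:ℝ)..1, a z)
    linarith
  have hcube : ∫ x in (0:ℝ)..1, a x ^ 3 ≤
      ((∫ z in (0:ℝ)..1, |a z|) + ∫ z in (0:ℝ)..1, |a1 z|) * M := by
    rw [← hM, ← intervalIntegral.integral_const_mul]
    refine integral_mono_on zero_le_one (ii (by fun_prop)) (ii (by fun_prop)) fun y hy => ?_
    calc a y ^ 3 = a y * a y ^ 2 := by ring
      _ ≤ _ := mul_le_mul_of_nonneg_right ((le_abs_self _).trans (hsup y hy)) (sq_nonneg _)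
  have e1 := integral_abs_le hc 1
  have e2 := integral_abs_le hc1 M
  have e3 := mul_le_mul_of_nonneg_left e1 hM0
  rw [hM] at e3
  have hsplit : (∫ x in (0:ℝ)..1, a1 x ^ 2) / 2 + (∫ x in (0:ℝ)..1, a2 x ^ 2) / 2
      - (∫ x in (0:ℝ)..1, a x ^ 3) / 6 = H := by
    rw [← hH, integral_sub (ii (by fun_prop)) (ii (by fun_prop)),
      integral_add (ii (by fun_prop)) (ii (by fun_prop))]
    simp only [intervalIntegral.integral_div]
  -- the slope has mean zero by periodicity
  have h1 := abs_le_of_mean ha1 ha2 hx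
  rw [integral_flux ha hc1 hper, sub_zero] at h1
  have e4 := integral_abs_le ha2 1
  linarith

/-! ### Evolution of integrals over a period -/

/-- If the time derivative of a density is a flux derivative `F'` plus a remainder `r`, only the
remainder contributes to the evolution of its integral. -/
lemma balance_law {q : ℝ → ℝ → ℝ} (hq : Smooth q) {F F' r : ℝ → ℝ} {t : ℝ}
    (hqt : ∀ x, HasDerivAt (fun s => q x s) (F' x + r x) t)
    (hF : ∀ x, HasDerivAt F (F' x) x) (hF' : Continuous F') (hr : Continuous r)
    (hper : F 1 = F 0) :
    HasDerivAt (fun s => ∫ x in (0:ℝ)..1, q x s) (∫ x in (0:ℝ)..1, r x) t := by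
  have h := hq.hasDerivAt_integral t
  have e : (fun x => dt q x t) = fun x => F' x + r x := by
    ext x
    exact (hqt x).deriv
  rwa [e, integral_add (hF'.intervalIntegrable _ _) (hr.intervalIntegrable _ _),
    integral_flux hF hF' hper, zero_add] at h

/-- Grönwall's inequality in differential form on the half-line. -/
lemma gronwall {E E' : ℝ → ℝ} {K : ℝ} (hc : Continuous E)
    (hE : ∀ t, 0 < t → HasDerivAt E (E' t) t)
    (hK : ∀ t, 0 < t → E' t ≤ K * E t) {t : ℝ} (ht : 0 ≤ t) : E t ≤ Real.exp (K * t) * E 0 := by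
  have hd : ∀ s, 0 < s → HasDerivAt (fun s => Real.exp (-(K * s)) * E s)
      (Real.exp (-(K * s)) * (E' s - K * E s)) s := fun s hs => by
    have := (((hasDerivAt_id s).const_mul K).neg.exp).mul (hE s hs)
    refine HasDerivAt.congr_deriv (this) ?_
    simp
    ring
  have ha : AntitoneOn (fun s => Real.exp (-(K * s)) * E s) (Ici 0) := by
    refine antitoneOn_of_hasDerivWithinAt_nonpos (convex_Ici 0)
      (by fun_prop : Continuous _).continuousOn
      (fun s hs => (hd s (interior_Ici.subset hs)).hasDerivWithinAt) fun s hs => ?_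
    rw [interior_Ici] at hs
    exact mul_nonpos_of_nonneg_of_nonpos (Real.exp_pos _).le (by linarith [hK s hs])
  have h := ha (mem_Ici.2 le_rfl) ht ht
  simp only [mul_zero, neg_zero, Real.exp_zero, one_mul, Real.exp_neg] at h
  rwa [inv_mul_le_iff₀ (Real.exp_pos _)] at h

lemma conserved {E : ℝ → ℝ} (hc : Continuous E) (hE : ∀ t, 0 ≤ t → HasDerivAt E 0 t) {t : ℝ} (ht : 0 ≤ t) :
    E t = E 0 := by
  have h1 := gronwall (K := 0) hc (fun t ht => hE t ht.le) (by simp) ht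
  have h2 := gronwall (K := 0) hc.neg (fun t ht => (hE t ht.le).neg) (by simp) ht
  simp at h1 h2
  exact le_antisymm h1 h2

lemma Smooth.hasDerivAt_iter {v : ℝ → ℝ → ℝ} (h : Smooth v) (n : ℕ) (x t : ℝ) :
    HasDerivAt (fun y => Kawahara.dx^[n] v y t) (Kawahara.dx^[n + 1] v x t) x := by
  rw [Function.iterate_succ_apply']
  exact (h.iter n).hasDerivAt_dx x t

lemma Smooth.hasDerivAt_iter_time {v : ℝ → ℝ → ℝ} (h : Smooth v) (n : ℕ) (x t : ℝ) :
    HasDerivAt (fun s => Kawahara.dx^[n] v x s) (Kawahara.dx^[n] (Kawahara.dt v) x t) t := by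
  rw [← h.dt_iter]
  exact (h.iter n).hasDerivAt_dt x t

/-! ### Conservation laws of the Kawahara equation -/

/-- The Kawahara equation on the half-line `t ≥ 0`, in terms of the operators `dx` and `dt`. -/
def Solves (u : ℝ → ℝ → ℝ) : Prop := ∀ x t, 0 ≤ t →
  dt u x t = -u x t * dx^[1] u x t - dx^[3] u x t + dx^[5] u x t

lemma Per.eq_ends {v : ℝ → ℝ → ℝ} (h : Per v) (t : ℝ) : v 1 t = v 0 t := by
  simpa using h 0 t

/-- Conservation of the mass `∫ u²`. -/
lemma mass_conserved {u : ℝ → ℝ → ℝ} (hu : Smooth u) (hp : Per u) (he : Solves u) {t : ℝ}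
    (ht : 0 ≤ t) : ∫ x in (0:ℝ)..1, u x t ^ 2 = ∫ x in (0:ℝ)..1, u x 0 ^ 2 := by
  have hq : Smooth fun x t => u x t ^ 2 := ContDiff.pow hu 2
  refine conserved (E := fun t => ∫ x in (0:ℝ)..1, u x t ^ 2) hq.continuous_integral (fun t ht => ?_) ht
  have c := fun n => (hu.iter n).continuous_slice t
  have c0 := c 0; have c1 := c 1; have c3 := c 3; have c5 := c 5
  have p := fun n => (hp.iter n).eq_ends t
  have d := fun n x => hu.hasDerivAt_iter n x t
  have := balance_law hq (t := t) (r := fun _ => 0)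
    (F := fun x => 2 * (u x t * (-u x t ^ 2 / 2 - dx^[2] u x t + dx^[4] u x t))
      + u x t ^ 3 / 3 + dx^[1] u x t ^ 2 - 2 * (dx^[1] u x t * dx^[3] u x t) + dx^[2] u x t ^ 2)
    (F' := fun x => 2 * u x t * (-u x t * dx^[1] u x t - dx^[3] u x t + dx^[5] u x t))
    (fun x => ?_) (fun x => ?_) ?_ continuous_const ?_
  · simpa using this
  · refine HasDerivAt.congr_deriv ((hu.hasDerivAt_iter_time 0 x t).pow 2) ?_
    simp only [Function.iterate_zero, id, he x t ht]
    push_cast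
    ring
  · have h0 := d 0 x
    refine HasDerivAt.congr_deriv ((((((h0.mul ((((h0.pow 2).neg.div_const 2).sub (d 2 x)).add (d 4 x))).const_mul 2).add
      ((h0.pow 3).div_const 3)).add ((d 1 x).pow 2)).sub
      (((d 1 x).mul (d 3 x)).const_mul 2)).add ((d 2 x).pow 2)) ?_
    simp only [Function.iterate_zero, id, Pi.add_apply, Pi.sub_apply,
      Pi.neg_apply, Pi.pow_apply]
    push_cast
    ring
  · simp only [Function.iterate_zero, id] at c0
    fun_prop
  · have p0 : u 1 t = u 0 t := p 0
    simp only [p, p0]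

/-- Conservation of the energy `∫ (u_x²/2 + u_xx²/2 - u³/6)`. With `G` its variational derivative,
the equation reads `u_t = G_x`. -/
lemma energy_conserved {u : ℝ → ℝ → ℝ} (hu : Smooth u) (hp : Per u) (he : Solves u) {t : ℝ}
    (ht : 0 ≤ t) :
    ∫ x in (0:ℝ)..1, (dx^[1] u x t ^ 2 / 2 + dx^[2] u x t ^ 2 / 2 - u x t ^ 3 / 6) =
      ∫ x in (0:ℝ)..1, (dx^[1] u x 0 ^ 2 / 2 + dx^[2] u x 0 ^ 2 / 2 - u x 0 ^ 3 / 6) := by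
  have hq : Smooth fun x t => dx^[1] u x t ^ 2 / 2 + dx^[2] u x t ^ 2 / 2 - u x t ^ 3 / 6 :=
    ((((hu.iter 1 : ContDiff _ _ _).pow 2).div_const 2).add
      (((hu.iter 2 : ContDiff _ _ _).pow 2).div_const 2)).sub
        (((hu : ContDiff _ _ _).pow 3).div_const 6)
  refine conserved (E := fun t => ∫ x in (0:ℝ)..1,
    (dx^[1] u x t ^ 2 / 2 + dx^[2] u x t ^ 2 / 2 - u x t ^ 3 / 6)) hq.continuous_integral (fun t ht => ?_) ht
  have c := fun n => (hu.iter n).continuous_slice t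
  have c0 := c 0; have c1 := c 1; have c2 := c 2
  have cw := fun n => (hu.dt.iter n).continuous_slice t
  have cw0 := cw 0; have cw1 := cw 1; have cw2 := cw 2
  have p := fun n => (hp.iter n).eq_ends t
  have pw := fun n => (hp.dt.iter n).eq_ends t
  have d := fun n x => hu.hasDerivAt_iter n x t
  have dw := fun n x => hu.dt.hasDerivAt_iter n x t
  have := balance_law hq (t := t) (r := fun _ => 0)
    (F := fun x => (-u x t ^ 2 / 2 - dx^[2] u x t + dx^[4] u x t) ^ 2 / 2
      + dx^[1] u x t * dt u x t + dx^[2] u x t * dx^[1] (dt u) x t - dx^[3] u x t * dt u x t)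
    (F' := fun x => dx^[1] u x t * dx^[1] (dt u) x t + dx^[2] u x t * dx^[2] (dt u) x t
      - u x t ^ 2 / 2 * dt u x t)
    (fun x => ?_) (fun x => ?_) ?_ continuous_const ?_
  · simpa using this
  · have s := fun n => hu.hasDerivAt_iter_time n x t
    refine HasDerivAt.congr_deriv (((((s 1).pow 2).div_const 2).add (((s 2).pow 2).div_const 2)).sub
        (((s 0).pow 3).div_const 6)) ?_
    simp only [Function.iterate_zero, id]
    push_cast
    ring
  · have h0 := d 0 x
    refine HasDerivAt.congr_deriv ((((((((h0.pow 2).neg.div_const 2).sub (d 2 x)).add (d 4 x)).pow 2).div_const 2).add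
      ((d 1 x).mul (dw 0 x))).add ((d 2 x).mul (dw 1 x)) |>.sub ((d 3 x).mul (dw 0 x))) ?_
    have e := he x t ht
    simp only [Function.iterate_zero, id, Pi.add_apply, Pi.sub_apply,
      Pi.neg_apply, Pi.pow_apply]
    push_cast
    linear_combination -(-u x t ^ 2 / 2 - dx^[2] u x t + dx^[4] u x t) * e
  · simp only [Function.iterate_zero, id] at c0 cw0
    fun_prop
  · have p0 : u 1 t = u 0 t := p 0
    have pw0 : dt u 1 t = dt u 0 t := pw 0
    simp only [p, p0, pw, pw0]

/-- The equation differentiated in time; `t > 0` is needed to differentiate a relation that is only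
known on the half-line. -/
lemma Solves.dt_dt {u : ℝ → ℝ → ℝ} (hu : Smooth u) (he : Solves u) (x : ℝ) {t : ℝ} (ht : 0 < t) :
    dt (dt u) x t = -dt u x t * dx^[1] u x t - u x t * dx^[1] (dt u) x t
      - dx^[3] (dt u) x t + dx^[5] (dt u) x t := by
  have s := fun n => hu.hasDerivAt_iter_time n x t
  have h := (((s 0).neg.mul (s 1)).sub (s 3)).add (s 5)
  have e : (fun s => dt u x s) =ᶠ[nhds t] fun s =>
      -u x s * dx^[1] u x s - dx^[3] u x s + dx^[5] u x s := by
    filter_upwards [lt_mem_nhds ht] with s hs using he x s hs.le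
  have := (h.congr_of_eventuallyEq e).deriv
  rw [show dt (dt u) x t = deriv (fun s => dt u x s) t from rfl, this]
  simp only [Function.iterate_zero, id, Pi.neg_apply]
  ring

/-- The energy identity `d/dt ∫ u_t² = -∫ u_x u_t²`: dispersive terms drop out. -/
lemma hasDerivAt_integral_dt_sq {u : ℝ → ℝ → ℝ} (hu : Smooth u) (hp : Per u) (he : Solves u)
    {t : ℝ} (ht : 0 < t) :
    HasDerivAt (fun t => ∫ x in (0:ℝ)..1, dt u x t ^ 2)
      (∫ x in (0:ℝ)..1, -dx^[1] u x t * dt u x t ^ 2) t := by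
  have c0 := (hu.iter 0).continuous_slice t
  have c1 := (hu.iter 1).continuous_slice t
  have cw := fun n => (hu.dt.iter n).continuous_slice t
  have cw0 := cw 0; have cw1 := cw 1; have cw3 := cw 3; have cw5 := cw 5
  simp only [Function.iterate_zero, id] at c0 cw0
  have pw := fun n => (hp.dt.iter n).eq_ends t
  have d := fun n x => hu.hasDerivAt_iter n x t
  have dw := fun n x => hu.dt.hasDerivAt_iter n x t
  have hq : Smooth fun x t => dt u x t ^ 2 := ContDiff.pow hu.dt 2
  refine balance_law hq (t := t)
    (F := fun x => -(u x t * dt u x t ^ 2) - 2 * (dt u x t * dx^[2] (dt u) x t)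
      + dx^[1] (dt u) x t ^ 2 + 2 * (dt u x t * dx^[4] (dt u) x t)
      - 2 * (dx^[1] (dt u) x t * dx^[3] (dt u) x t) + dx^[2] (dt u) x t ^ 2)
    (F' := fun x => 2 * dt u x t * (-dt u x t * dx^[1] u x t - u x t * dx^[1] (dt u) x t
      - dx^[3] (dt u) x t + dx^[5] (dt u) x t) + dx^[1] u x t * dt u x t ^ 2)
    (fun x => ?_) (fun x => ?_) ?_ ?_ ?_
  · refine HasDerivAt.congr_deriv ((hu.dt.hasDerivAt_dt x t).pow 2) ?_
    rw [he.dt_dt hu x ht]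
    push_cast
    ring
  · refine HasDerivAt.congr_deriv (((((((d 0 x).mul ((dw 0 x).pow 2)).neg.sub
      (((dw 0 x).mul (dw 2 x)).const_mul 2)).add ((dw 1 x).pow 2)).add
      (((dw 0 x).mul (dw 4 x)).const_mul 2)).sub (((dw 1 x).mul (dw 3 x)).const_mul 2)).add
      ((dw 2 x).pow 2)) ?_
    simp only [Function.iterate_zero, id, Pi.pow_apply]
    push_cast
    ring
  · fun_prop
  · fun_prop
  · have p0 : u 1 t = u 0 t := hp.eq_ends t
    have pw0 : dt u 1 t = dt u 0 t := pw 0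
    simp only [p0, pw, pw0]

/-- Mass and energy bound the slope uniformly in space and time. -/
lemma exists_slope_bound {u : ℝ → ℝ → ℝ} (hu : Smooth u) (hp : Per u) (he : Solves u) :
    ∃ K : ℝ, 0 ≤ K ∧ ∀ t, 0 ≤ t → ∀ x ∈ Icc (0:ℝ) 1, |dx^[1] u x t| ≤ K := by
  have key := fun t (ht : 0 ≤ t) x (hx : x ∈ Icc (0:ℝ) 1) =>
    slope_le (fun x => hu.hasDerivAt_iter 0 x t) (fun x => hu.hasDerivAt_iter 1 x t)
      ((hu.iter 2).continuous_slice t) (hp.eq_ends t) (mass_conserved hu hp he ht)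
      (energy_conserved hu hp he ht) hx
  exact ⟨_, (abs_nonneg _).trans (key 0 le_rfl 0 (by simp)), key⟩

end Kawahara

open Kawahara in
/-- Paper's Lemma 2.5, estimate (2.24): if `u` is a smooth solution of the Kawahara equation
`u_t = −u u_x − u_{xxx} + u_{xxxxx}` on `ℝ × [0,∞)`, 1-periodic in `x`, with initial data
`f = u(·,0)`, then there is `γ ≥ 0` such that for all `t ≥ 0`,
`∫₀¹ u_t(x,t)² dx ≤ e^{γt} ∫₀¹ (−f f' − f''' + f''''')² dx`. -/
theorem kawahara_ut_exponential_bound (u : ℝ → ℝ → ℝ) (f : ℝ → ℝ)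
    (hsmooth : ContDiff ℝ (⊤ : ℕ∞) (Function.uncurry u))
    (hper : ∀ x t : ℝ, u (x + 1) t = u x t)
    (heq : ∀ x : ℝ, ∀ t : ℝ, 0 ≤ t →
      deriv (fun s => u x s) t =
        - u x t * deriv (fun y => u y t) x
        - iteratedDeriv 3 (fun y => u y t) x
        + iteratedDeriv 5 (fun y => u y t) x)
    (hf : ∀ x : ℝ, f x = u x 0) :
    ∃ γ : ℝ, 0 ≤ γ ∧ ∀ t : ℝ, 0 ≤ t →
      (∫ x in (0:ℝ)..1, (deriv (fun s => u x s) t) ^ 2)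
        ≤ Real.exp (γ * t)
          * ∫ x in (0:ℝ)..1,
              (- f x * deriv f x - iteratedDeriv 3 f x + iteratedDeriv 5 f x) ^ 2 := by
  have hu : Smooth u := hsmooth
  have hp : Per u := hper
  have he : Solves u := fun x t ht => by
    have h := heq x t ht
    rw [iteratedDeriv_eq_iter, iteratedDeriv_eq_iter] at h
    exact h
  obtain ⟨K, hK0, hK⟩ := exists_slope_bound hu hp he
  refine ⟨K, hK0, fun t ht => ?_⟩
  have h0 : ∀ x, - f x * deriv f x - iteratedDeriv 3 f x + iteratedDeriv 5 f x = dt u x 0 := by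
    obtain rfl : f = fun x => u x 0 := funext hf
    exact fun x => (heq x 0 le_rfl).symm
  simp only [h0]
  refine gronwall (E := fun t => ∫ x in (0:ℝ)..1, dt u x t ^ 2) ?_
    (fun t ht => hasDerivAt_integral_dt_sq hu hp he ht) (fun t ht => ?_) ht
  · have hq : Smooth fun x t => dt u x t ^ 2 := ContDiff.pow hu.dt 2
    exact hq.continuous_integral
  · have c1 := (hu.iter 1).continuous_slice t
    have cw := hu.dt.continuous_slice t
    rw [← intervalIntegral.integral_const_mul]
    refine integral_mono_on zero_le_one ((by fun_prop : Continuous _).intervalIntegrable _ _)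
      ((by fun_prop : Continuous _).intervalIntegrable _ _) fun x hx => ?_
    exact mul_le_mul_of_nonneg_right ((neg_le_abs _).trans (hK t ht.le x hx)) (sq_nonneg _)
end
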